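/- arXiv:2104.11053 — 3 statements merged into one kernel-verified Lean document; each statement's English description precedes it below -/
import Mathlib

section
/- For t > 0 and reals b₁, b₂: (i) F_C equals the pure F₅-form F⁵(x,y,z) = (θ*₀/2)[x¹(y⁰z² + y²z⁰) + x²(y⁰z¹ + y¹z⁰)] for some real θ*₀ if and only if b₁ = b₂ = 0 (i.e. the cone is an F₅-manifold iff the underlying surface is a W₀-manifold, θ′ = 0); (ii) for no reals θ₁, θ₂ does F_C equal the pure F₁-form F¹(x,y,z) = (x¹θ₁ − x²θ₂)(y¹z¹ − y²z²) (the cone can never belong to F₁). -/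
noncomputable section

/-- `V = ℝ³` with standard basis and inner product. -/
abbrev V3 : Type := Fin 3 → ℝ

/-- The standard basis `e₀, e₁, e₂` of `V3`. -/
def e3 (i : Fin 3) : V3 := Pi.single i 1

/-- The standard inner product `g` on `V3`. -/
def g3 (x y : V3) : ℝ := ∑ i, x i * y i

/-- The paracontact endomorphism `φ`: `φe₀ = 0`, `φe₁ = e₂`, `φe₂ = e₁`. -/
def phi3 (x : V3) : V3 := ![0, x 2, x 1]

/-- A map `F : V×V×V → ℝ` is trilinear. -/
def IsTrilinear (F : V3 → V3 → V3 → ℝ) : Prop :=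
  (∀ (c : ℝ) (x x' y z : V3), F (c • x + x') y z = c * F x y z + F x' y z) ∧
  (∀ (c : ℝ) (x y y' z : V3), F x (c • y + y') z = c * F x y z + F x y' z) ∧
  (∀ (c : ℝ) (x y z z' : V3), F x y (c • z + z') = c * F x y z + F x y z')

/-- The components of the fundamental tensor `F_C` of the cone `C(N)`. -/
def FCcomp (t b₁ b₂ : ℝ) : Fin 3 → Fin 3 → Fin 3 → ℝ :=
  ![![![0, 0, 0], ![0, 0, 0], ![0, 0, 0]],
    ![![0, 0, -1 / t], ![0, b₁, 0], ![-1 / t, 0, -b₁]],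
    ![![0, -1 / t, 0], ![-1 / t, -b₂, 0], ![0, 0, b₂]]]

/-- A map `V3 → ℝ` that respects `c • x + x'` is determined by its values on the basis. -/
lemma eq_sum_basis_of_linear (f : V3 → ℝ)
    (hf : ∀ (c : ℝ) (x x' : V3), f (c • x + x') = c * f x + f x') (x : V3) :
    f x = ∑ i, x i * f (e3 i) := by
  have h0 : f 0 = 0 := by
    have h := hf 1 0 0
    simp only [smul_zero, add_zero, one_mul] at h
    linarith
  have hx : x = x 0 • e3 0 + (x 1 • e3 1 + (x 2 • e3 2 + 0)) := by
    ext i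
    fin_cases i <;> simp [e3]
  conv_lhs => rw [hx]
  rw [hf, hf, hf, h0, Fin.sum_univ_three]
  ring

/-- A trilinear form is the contraction of its arguments with its components. -/
lemma IsTrilinear.eq_sum {F : V3 → V3 → V3 → ℝ} (hF : IsTrilinear F) (x y z : V3) :
    F x y z = ∑ i, x i * ∑ j, y j * ∑ k, z k * F (e3 i) (e3 j) (e3 k) := by
  obtain ⟨h₁, h₂, h₃⟩ := hF
  rw [eq_sum_basis_of_linear (fun x => F x y z) (fun c x x' => h₁ c x x' y z) x]
  refine Finset.sum_congr rfl fun i _ => ?_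
  rw [eq_sum_basis_of_linear (fun y => F (e3 i) y z) (fun c y y' => h₂ c _ y y' z) y]
  congr 1
  refine Finset.sum_congr rfl fun j _ => ?_
  rw [eq_sum_basis_of_linear (fun z => F (e3 i) (e3 j) z) (fun c z z' => h₃ c _ _ z z') z]

/-- (i) The cone is an `F₅`-manifold iff the underlying surface is a `W₀`-manifold
(`θ′ = 0`, i.e. `b₁ = b₂ = 0`); (ii) the cone can never belong to `F₁`. -/
theorem statement4 (t b₁ b₂ : ℝ) (ht : 0 < t)
    (F : V3 → V3 → V3 → ℝ) (hlin : IsTrilinear F)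
    (hsym : ∀ x y z, F x y z = F x z y)
    (hcomp : ∀ i j k, F (e3 i) (e3 j) (e3 k) = FCcomp t b₁ b₂ i j k) :
    ((∃ θs₀ : ℝ, ∀ x y z, F x y z =
        θs₀ / 2 * (x 1 * (y 0 * z 2 + y 2 * z 0) + x 2 * (y 0 * z 1 + y 1 * z 0)))
      ↔ (b₁ = 0 ∧ b₂ = 0)) ∧
    ¬ (∃ θ₁ θ₂ : ℝ, ∀ x y z, F x y z =
        (x 1 * θ₁ - x 2 * θ₂) * (y 1 * z 1 - y 2 * z 2)) := by
  refine ⟨⟨?_, ?_⟩, ?_⟩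
  · rintro ⟨θ, h⟩
    have h₁ := h (e3 1) (e3 1) (e3 1)
    have h₂ := h (e3 2) (e3 2) (e3 2)
    rw [hcomp] at h₁ h₂
    exact ⟨by simpa [FCcomp, e3] using h₁, by simpa [FCcomp, e3] using h₂⟩
  · rintro ⟨rfl, rfl⟩
    refine ⟨-2 / t, fun x y z => ?_⟩
    rw [hlin.eq_sum]
    simp only [hcomp, Fin.sum_univ_three]
    simp [FCcomp]
    ring
  · rintro ⟨θ₁, θ₂, h⟩
    have h₁ := h (e3 1) (e3 2) (e3 0)
    rw [hcomp] at h₁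
    simp [FCcomp, e3, ht.ne'] at h₁
end
end

section
/- For reals b₁, b₂: (i) F_S equals the pure F₄-form F⁴(x,y,z) = (θ₀/2)[x¹(y⁰z¹ + y¹z⁰) + x²(y⁰z² + y²z⁰)] for some real θ₀ if and only if b₁ = b₂ = 0 (i.e. the hyperbolic extension is an F₄-manifold iff the underlying surface is a W₀-manifold, θ′ = 0); (ii) for no reals θ₁, θ₂ does F_S equal the pure F₁-form F¹(x,y,z) = (x¹θ₁ − x²θ₂)(y¹z¹ − y²z²) (the hyperbolic extension can never belong to F₁). -/
noncomputable section

/-- The components of the fundamental tensor `F_S` of the hyperbolic extension `S(N)`. -/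
def FScomp (b₁ b₂ : ℝ) : Fin 3 → Fin 3 → Fin 3 → ℝ :=
  ![![![0, 0, 0], ![0, 0, 0], ![0, 0, 0]],
    ![![0, -1, 0], ![-1, b₁, 0], ![0, 0, -b₁]],
    ![![0, 0, -1], ![0, -b₂, 0], ![-1, 0, b₂]]]

/-- A functional on `V3` that respects linear combinations is determined by its values on the
standard basis. -/
theorem eq_sum_mul_apply_e3 (f : V3 → ℝ)
    (hf : ∀ (c : ℝ) (x x' : V3), f (c • x + x') = c * f x + f x') (x : V3) :
    f x = x 0 * f (e3 0) + x 1 * f (e3 1) + x 2 * f (e3 2) := by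
  have h0 : f 0 = 0 := by simpa using hf (-1) 0 0
  have hx : x = x 0 • e3 0 + (x 1 • e3 1 + (x 2 • e3 2 + 0)) := by
    ext i
    fin_cases i <;> simp [e3]
  conv_lhs => rw [hx]
  rw [hf, hf, hf, h0]
  ring

/-- A trilinear map on `V3` with the components of `F_S` is given by the polynomial formula of
`F_S`. -/
theorem IsTrilinear.eq_of_FScomp {b₁ b₂ : ℝ} {F : V3 → V3 → V3 → ℝ} (hlin : IsTrilinear F)
    (hcomp : ∀ i j k, F (e3 i) (e3 j) (e3 k) = FScomp b₁ b₂ i j k) (x y z : V3) :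
    F x y z = (x 1 * b₁ - x 2 * b₂) * (y 1 * z 1 - y 2 * z 2)
      - (x 1 * (y 0 * z 1 + y 1 * z 0) + x 2 * (y 0 * z 2 + y 2 * z 0)) := by
  obtain ⟨h₁, h₂, h₃⟩ := hlin
  have hx := fun y z ↦ eq_sum_mul_apply_e3 (F · y z) (fun c u v ↦ h₁ c u v y z) x
  have hy := fun x z ↦ eq_sum_mul_apply_e3 (F x · z) (fun c u v ↦ h₂ c x u v z) y
  have hz := fun x y ↦ eq_sum_mul_apply_e3 (F x y ·) (fun c u v ↦ h₃ c x y u v) z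
  rw [hx]
  simp only [hy (e3 _)]
  simp only [hz (e3 _) (e3 _), hcomp]
  simp [FScomp]
  ring

/-- (i) The hyperbolic extension is an `F₄`-manifold iff the underlying surface is a
`W₀`-manifold (`θ′ = 0`, i.e. `b₁ = b₂ = 0`); (ii) the hyperbolic extension can never
belong to `F₁`. -/
theorem statement9 (b₁ b₂ : ℝ)
    (F : V3 → V3 → V3 → ℝ) (hlin : IsTrilinear F)
    (hsym : ∀ x y z, F x y z = F x z y)
    (hcomp : ∀ i j k, F (e3 i) (e3 j) (e3 k) = FScomp b₁ b₂ i j k) :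
    ((∃ θ₀ : ℝ, ∀ x y z, F x y z =
        θ₀ / 2 * (x 1 * (y 0 * z 1 + y 1 * z 0) + x 2 * (y 0 * z 2 + y 2 * z 0)))
      ↔ (b₁ = 0 ∧ b₂ = 0)) ∧
    ¬ (∃ θ₁ θ₂ : ℝ, ∀ x y z, F x y z =
        (x 1 * θ₁ - x 2 * θ₂) * (y 1 * z 1 - y 2 * z 2)) := by
  have hF := hlin.eq_of_FScomp hcomp
  refine ⟨⟨?_, ?_⟩, ?_⟩
  · rintro ⟨θ₀, h⟩
    have h₁ := h (e3 1) (e3 1) (e3 1)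
    have h₂ := h (e3 2) (e3 2) (e3 2)
    rw [hF] at h₁ h₂
    constructor
    · simpa [e3] using h₁
    · simpa [e3] using h₂
  · rintro ⟨rfl, rfl⟩
    exact ⟨-2, fun x y z ↦ by rw [hF]; ring⟩
  · rintro ⟨θ₁, θ₂, h⟩
    have h₁ := h (e3 1) (e3 1) (e3 0)
    rw [hF] at h₁
    simp [e3] at h₁
end
end

section
/- Let k′ ∈ ℝ, t > 0, and let R_S be the curvature-like tensor with parameters a, b₁, b₂, with Ricci tensor ρ and associated Ricci tensor ρ*. Then the following are equivalent: (1) b₁ = b₂ = 0 and a = k′cosh(2t) + 1 (which holds exactly when the underlying surface is a W₀-manifold); (2) ρ = k′cosh(2t)·g − (2 + k′cosh(2t))·η⊗η; (3) ρ* = −(1 + k′cosh(2t))·(g̃ − η⊗η), where g̃(x,y) = g(x,φy) + η(x)η(y). -/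
noncomputable section

/-- A map `R : V⁴ → ℝ` is 4-linear. -/
def IsQuadrilinear (R : V3 → V3 → V3 → V3 → ℝ) : Prop :=
  (∀ (c : ℝ) (x x' y z w : V3), R (c • x + x') y z w = c * R x y z w + R x' y z w) ∧
  (∀ (c : ℝ) (x y y' z w : V3), R x (c • y + y') z w = c * R x y z w + R x y' z w) ∧
  (∀ (c : ℝ) (x y z z' w : V3), R x y (c • z + z') w = c * R x y z w + R x y z' w) ∧
  (∀ (c : ℝ) (x y z w w' : V3), R x y z (c • w + w') = c * R x y z w + R x y z w')

/-- A curvature-like tensor: 4-linear with the standard curvature symmetries. -/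
def CurvatureLike (R : V3 → V3 → V3 → V3 → ℝ) : Prop :=
  IsQuadrilinear R ∧
  (∀ x y z w, R x y z w = - R y x z w) ∧
  (∀ x y z w, R x y z w = - R x y w z) ∧
  (∀ x y z w, R x y z w = R z w x y)

/-- A vector is the combination of the standard basis vectors with its coordinates. -/
theorem V3.eq_combination (x : V3) :
    x = x 0 • e3 0 + (x 1 • e3 1 + (x 2 • e3 2 + 0)) := by
  funext i
  fin_cases i <;> simp [e3]

/-- A function on `V3` that respects `c • x + x'` is determined by its values on the basis. -/
theorem eq_sum_basis {f : V3 → ℝ} (hf : ∀ (c : ℝ) (x x' : V3), f (c • x + x') = c * f x + f x')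
    (x : V3) : f x = x 0 * f (e3 0) + x 1 * f (e3 1) + x 2 * f (e3 2) := by
  have h0 : f 0 = 0 := by simpa using hf 1 0 0
  conv_lhs => rw [V3.eq_combination x]
  rw [hf, hf, hf, h0]
  ring

theorem phi3_e3_zero : phi3 (e3 0) = 0 := by
  funext i
  fin_cases i <;> simp [phi3, e3]

theorem phi3_e3_one : phi3 (e3 1) = e3 2 := by
  funext i
  fin_cases i <;> simp [phi3, e3]

theorem phi3_e3_two : phi3 (e3 2) = e3 1 := by
  funext i
  fin_cases i <;> simp [phi3, e3]

namespace CurvatureLike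

variable {R : V3 → V3 → V3 → V3 → ℝ}

theorem expand_middle (hR : CurvatureLike R) (x y z w : V3) :
    R x y z w =
      y 0 * (z 0 * R x (e3 0) (e3 0) w + z 1 * R x (e3 0) (e3 1) w + z 2 * R x (e3 0) (e3 2) w) +
      y 1 * (z 0 * R x (e3 1) (e3 0) w + z 1 * R x (e3 1) (e3 1) w + z 2 * R x (e3 1) (e3 2) w) +
      y 2 * (z 0 * R x (e3 2) (e3 0) w + z 1 * R x (e3 2) (e3 1) w + z 2 * R x (e3 2) (e3 2) w) := by
  obtain ⟨⟨-, hy, hz, -⟩, -⟩ := hR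
  rw [eq_sum_basis (f := fun y => R x y z w) (fun c y y' => hy c x y y' z w) y]
  simp only [fun u => eq_sum_basis (f := fun z => R x u z w) (fun c z z' => hz c x u z z' w) z]

theorem self_left (hR : CurvatureLike R) (x z w : V3) : R x x z w = 0 := by
  linarith [hR.2.1 x x z w]

theorem self_right (hR : CurvatureLike R) (x y z : V3) : R x y z z = 0 := by
  linarith [hR.2.2.1 x y z z]

theorem zero_right (hR : CurvatureLike R) (x y z : V3) : R x y z 0 = 0 := by
  simpa using hR.1.2.2.2 1 x y z 0 0

theorem swap_both (hR : CurvatureLike R) (x y z w : V3) : R x y z w = R y x w z := by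
  rw [hR.2.1, hR.2.2.1, neg_neg]

variable {a b₁ b₂ : ℝ}

/-- The Ricci tensor of `R_S` in coordinates. -/
theorem ricci_eq (hR : CurvatureLike R)
    (h1 : R (e3 1) (e3 2) (e3 2) (e3 1) = a)
    (h2 : R (e3 1) (e3 2) (e3 1) (e3 0) = -b₂)
    (h3 : R (e3 1) (e3 2) (e3 2) (e3 0) = b₁)
    (h4 : R (e3 0) (e3 1) (e3 1) (e3 0) = -1)
    (h5 : R (e3 0) (e3 2) (e3 2) (e3 0) = -1)
    (h6 : R (e3 0) (e3 1) (e3 0) (e3 2) = 0) (y z : V3) :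
    ∑ i, R (e3 i) y z (e3 i) =
      -2 * (y 0 * z 0) + (a - 1) * (y 1 * z 1 + y 2 * z 2) +
        b₁ * (y 0 * z 1 + y 1 * z 0) + b₂ * (y 0 * z 2 + y 2 * z 0) := by
  have r2112 : R (e3 2) (e3 1) (e3 1) (e3 2) = a := by rw [hR.swap_both, h1]
  have r1001 : R (e3 1) (e3 0) (e3 0) (e3 1) = -1 := by rw [hR.swap_both, h4]
  have r2002 : R (e3 2) (e3 0) (e3 0) (e3 2) = -1 := by rw [hR.swap_both, h5]
  have r0120 : R (e3 0) (e3 1) (e3 2) (e3 0) = 0 := by rw [hR.2.2.1, h6, neg_zero]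
  have r0210 : R (e3 0) (e3 2) (e3 1) (e3 0) = 0 := by
    rw [hR.2.2.2, hR.swap_both, r0120]
  have r2012 : R (e3 2) (e3 0) (e3 1) (e3 2) = b₁ := by rw [hR.2.2.2, h3]
  have r2102 : R (e3 2) (e3 1) (e3 0) (e3 2) = b₁ := by rw [hR.swap_both, h3]
  have r1201 : R (e3 1) (e3 2) (e3 0) (e3 1) = b₂ := by rw [hR.2.2.1, h2, neg_neg]
  have r1021 : R (e3 1) (e3 0) (e3 2) (e3 1) = b₂ := by rw [hR.swap_both, hR.2.2.2, r1201]
  simp only [Fin.sum_univ_three, hR.expand_middle _ y z, hR.self_left, hR.self_right,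
    h1, h4, h5, r2112, r1001, r2002, r0120, r0210, r2012, r2102, r1201, r1021]
  ring

/-- The associated Ricci tensor of `R_S` in coordinates. -/
theorem ricci_star_eq (hR : CurvatureLike R)
    (h1 : R (e3 1) (e3 2) (e3 2) (e3 1) = a)
    (h2 : R (e3 1) (e3 2) (e3 1) (e3 0) = -b₂)
    (h3 : R (e3 1) (e3 2) (e3 2) (e3 0) = b₁)
    (h6 : R (e3 0) (e3 1) (e3 0) (e3 2) = 0) (y z : V3) :
    ∑ i, R (e3 i) y z (phi3 (e3 i)) =
      -a * (y 1 * z 2 + y 2 * z 1) - b₂ * (y 0 * z 1 + y 1 * z 0) -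
        b₁ * (y 0 * z 2 + y 2 * z 0) := by
  have r1212 : R (e3 1) (e3 2) (e3 1) (e3 2) = -a := by rw [hR.2.2.1, h1]
  have r2121 : R (e3 2) (e3 1) (e3 2) (e3 1) = -a := by rw [hR.swap_both, r1212]
  have r1002 : R (e3 1) (e3 0) (e3 0) (e3 2) = 0 := by rw [hR.2.1, h6, neg_zero]
  have r2001 : R (e3 2) (e3 0) (e3 0) (e3 1) = 0 := by rw [hR.2.2.2, hR.swap_both, r1002]
  have r1012 : R (e3 1) (e3 0) (e3 1) (e3 2) = -b₂ := by rw [hR.2.2.2, h2]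
  have r2101 : R (e3 2) (e3 1) (e3 0) (e3 1) = -b₂ := by rw [hR.swap_both, h2]
  have r1202 : R (e3 1) (e3 2) (e3 0) (e3 2) = -b₁ := by rw [hR.2.2.1, h3]
  have r2021 : R (e3 2) (e3 0) (e3 2) (e3 1) = -b₁ := by rw [hR.swap_both, hR.2.2.2, r1202]
  simp only [Fin.sum_univ_three, phi3_e3_zero, phi3_e3_one, phi3_e3_two, hR.zero_right,
    hR.expand_middle _ y z, hR.self_left, hR.self_right,
    r1212, r2121, r1002, r2001, r1012, r2101, r1202, r2021]
  ring

end CurvatureLike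

/-- For the curvature tensor `R_S` of the hyperbolic extension `S(N)` of a 2-dimensional
paracomplex Riemannian space-form `N` of curvature `k′`, the following are equivalent:
(1) `b₁ = b₂ = 0` and `a = k′cosh(2t) + 1` (i.e. `N` is a `W₀`-manifold);
(2) `ρ = k′cosh(2t)·g − (2 + k′cosh(2t))·η⊗η`;
(3) `ρ* = −(1 + k′cosh(2t))·(g̃ − η⊗η)`, where `g̃(x,y) = g(x,φy) + η(x)η(y)`. -/
theorem statement13 (k' t a b₁ b₂ : ℝ) (ht : 0 < t)
    (R : V3 → V3 → V3 → V3 → ℝ)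
    (hR : CurvatureLike R)
    (h1 : R (e3 1) (e3 2) (e3 2) (e3 1) = a)
    (h2 : R (e3 1) (e3 2) (e3 1) (e3 0) = -b₂)
    (h3 : R (e3 1) (e3 2) (e3 2) (e3 0) = b₁)
    (h4 : R (e3 0) (e3 1) (e3 1) (e3 0) = -1)
    (h5 : R (e3 0) (e3 2) (e3 2) (e3 0) = -1)
    (h6 : R (e3 0) (e3 1) (e3 0) (e3 2) = 0)
    (ρ ρs : V3 → V3 → ℝ)
    (hρ : ∀ y z, ρ y z = ∑ i, R (e3 i) y z (e3 i))
    (hρs : ∀ y z, ρs y z = ∑ i, R (e3 i) y z (phi3 (e3 i))) :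
    (((b₁ = 0 ∧ b₂ = 0) ∧ a = k' * Real.cosh (2 * t) + 1) ↔
      (∀ y z, ρ y z =
        k' * Real.cosh (2 * t) * g3 y z
          - (2 + k' * Real.cosh (2 * t)) * (y 0 * z 0))) ∧
    (((b₁ = 0 ∧ b₂ = 0) ∧ a = k' * Real.cosh (2 * t) + 1) ↔
      (∀ y z, ρs y z =
        -(1 + k' * Real.cosh (2 * t)) * ((g3 y (phi3 z) + y 0 * z 0) - y 0 * z 0))) := by
  have hric := hR.ricci_eq h1 h2 h3 h4 h5 h6
  have hstar := hR.ricci_star_eq h1 h2 h3 h6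
  simp only [hρ, hρs, hric, hstar]
  simp only [g3, phi3, Fin.sum_univ_three]
  refine ⟨⟨?_, fun h => ?_⟩, ⟨?_, fun h => ?_⟩⟩
  · rintro ⟨⟨rfl, rfl⟩, rfl⟩ y z
    ring
  · have h01 := h (e3 0) (e3 1)
    have h02 := h (e3 0) (e3 2)
    have h11 := h (e3 1) (e3 1)
    simp [e3] at h01 h02 h11
    exact ⟨⟨h01, h02⟩, by linarith⟩
  · rintro ⟨⟨rfl, rfl⟩, rfl⟩ y z
    simp [-mul_eq_mul_left_iff, -mul_eq_mul_right_iff]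
    ring
  · have h01 := h (e3 0) (e3 1)
    have h02 := h (e3 0) (e3 2)
    have h12 := h (e3 1) (e3 2)
    simp [e3] at h01 h02 h12
    exact ⟨⟨h02, h01⟩, by linarith⟩
end
end
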